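/- Let μ⁻, μ⁺ be probability measures on ℝ^d with compact supports X⁻, X⁺ and let c : X⁻ × X⁺ → ℝ be continuous. Assume there exists an optimal transport plan γ₀ ∈ Opt(μ⁻,μ⁺) with Ent(γ₀ | μ⁻⊗μ⁺) < +∞. Then lim_{ε→0⁺} (v_ε − v_0)/ε = inf { Ent(γ | μ⁻⊗μ⁺) : γ ∈ Opt(μ⁻,μ⁺) }; equivalently, v_ε − v_0 = ε·inf_{γ ∈ Opt(μ⁻,μ⁺)} Ent(γ | μ⁻⊗μ⁺) + o(ε) as ε → 0⁺. -/

import Mathlib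

open MeasureTheory Real Set Filter Classical
open scoped ENNReal NNReal Topology

noncomputable section

/-- Relative entropy (Kullback–Leibler divergence) `Ent(γ | q)`, with values in `EReal`:
it equals `∫ ρ log ρ dq` if `γ = ρ·q` (with `ρ log ρ` integrable) and `+∞` otherwise. -/
def Ent {α : Type*} [MeasurableSpace α] (γ q : Measure α) : EReal :=
  if γ ≪ q ∧ Integrable (fun x => ((γ.rnDeriv q) x).toReal * Real.log ((γ.rnDeriv q) x).toReal) q
  then ((∫ x, ((γ.rnDeriv q) x).toReal * Real.log ((γ.rnDeriv q) x).toReal ∂q : ℝ) : EReal)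
  else ⊤

/-- Entropic optimal transport cost
`v_ε = inf { ∫ c dγ + ε Ent(γ | μ⁻ ⊗ μ⁺) : γ coupling of μ⁻ and μ⁺ }`. -/
def entCost {α β : Type*} [MeasurableSpace α] [MeasurableSpace β]
    (μm : Measure α) (μp : Measure β) (c : α × β → ℝ) (ε : ℝ) : EReal :=
  sInf {v : EReal | ∃ γ : Measure (α × β), IsProbabilityMeasure γ ∧ γ.fst = μm ∧ γ.snd = μp ∧
    v = ((∫ p, c p ∂γ : ℝ) : EReal) + (ε : EReal) * Ent γ (μm.prod μp)}

/-- Support of a measure: the set of points all of whose open neighbourhoods have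
positive measure. -/
def msupport {α : Type*} [TopologicalSpace α] [MeasurableSpace α] (μ : Measure α) : Set α :=
  {x | ∀ U : Set α, IsOpen U → x ∈ U → μ U ≠ 0}

/-!
An optimal coupling `γ` competes in `v_ε`, so `v_ε ≤ v_0 + ε Ent γ`. For the reverse bound, fix
`m < inf Ent` over the optimal couplings: it suffices that all couplings of cost at most `v_0 + δ`
have entropy above `m` for some `δ > 0`, since the others already cost at least `v_0 + ε m` once
`ε m ≤ δ`. So one must show that near-optimal couplings of entropy at most `m` yield an optimal one
of entropy at most `m`.

Weak compactness is not needed here: on probability densities in `L¹` the entropy is lower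
semicontinuous and uniformly convex,
`‖f - g‖² / 8 + 2 Ent ((f + g) / 2) ≤ Ent f + Ent g`,
so in a decreasing sequence of closed convex sets whose entropy infima stay bounded, the almost
minimizers have diameter tending to `0`, and Cantor's intersection theorem produces a common
element.
-/

open InformationTheory

section KLFun

lemma two_mul_sub_sqrt_mul_sqrt_le_mul_log {x m : ℝ} (hx : 0 ≤ x) (hm : 0 < m) :
    2 * (x - √x * √m) ≤ x * (log x - log m) := by
  rcases hx.eq_or_lt with rfl | hx
  · simp
  have hlog : 1 - √m / √x ≤ (log x - log m) / 2 := by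
    have h := one_sub_inv_le_log_of_pos (div_pos (sqrt_pos.2 hx) (sqrt_pos.2 hm))
    rw [inv_div, log_div (sqrt_pos.2 hx).ne' (sqrt_pos.2 hm).ne', log_sqrt hx.le,
      log_sqrt hm.le] at h
    linarith
  have hsqrt : x * (√m / √x) = √x * √m := by
    rw [mul_div_left_comm, div_sqrt, mul_comm]
  linarith [mul_le_mul_of_nonneg_left hlog hx.le]

lemma sq_sqrt_sub_sqrt_add_klFun_midpoint_le {a b : ℝ} (ha : 0 ≤ a) (hb : 0 ≤ b) :
    (√a - √b) ^ 2 / 2 + 2 * klFun ((a + b) / 2) ≤ klFun a + klFun b := by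
  rcases (add_nonneg ha hb).eq_or_lt with h | h
  · obtain ⟨rfl, rfl⟩ := (add_eq_zero_iff_of_nonneg ha hb).1 h.symm
    norm_num [klFun_zero]
  have hm : 0 < (a + b) / 2 := half_pos h
  simp only [klFun_apply]
  nlinarith [two_mul_sub_sqrt_mul_sqrt_le_mul_log ha hm,
    two_mul_sub_sqrt_mul_sqrt_le_mul_log hb hm, sq_nonneg (√a + √b - 2 * √((a + b) / 2)),
    sq_sqrt ha, sq_sqrt hb, sq_sqrt hm.le]

lemma mul_abs_sub_le_sq_sqrt_sub_sqrt_add {a b : ℝ} (ha : 0 ≤ a) (hb : 0 ≤ b) (t : ℝ) :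
    t * |a - b| ≤ (√a - √b) ^ 2 / 2 + t ^ 2 * (a + b) := by
  have hfactor : |a - b| = |√a - √b| * (√a + √b) := by
    rw [← abs_of_nonneg (add_nonneg (sqrt_nonneg a) (sqrt_nonneg b)), ← abs_mul, mul_comm,
      ← sq_sub_sq, sq_sqrt ha, sq_sqrt hb]
  rw [hfactor, ← sq_abs (√a - √b)]
  nlinarith [sq_nonneg (|√a - √b| - t * (√a + √b)), sq_sqrt ha, sq_sqrt hb,
    mul_nonneg (sq_nonneg t) (sq_nonneg (√a - √b))]

lemma mul_abs_sub_add_klFun_midpoint_le {a b : ℝ} (ha : 0 ≤ a) (hb : 0 ≤ b) (t : ℝ) :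
    t * |a - b| + 2 * klFun ((a + b) / 2) ≤ klFun a + klFun b + t ^ 2 * (a + b) := by
  linarith [mul_abs_sub_le_sq_sqrt_sub_sqrt_add ha hb t,
    sq_sqrt_sub_sqrt_add_klFun_midpoint_le ha hb]

end KLFun

lemma nonempty_iInter_of_antitone_of_dist_le {X : Type*} [PseudoMetricSpace X] [CompleteSpace X]
    {T : ℕ → Set X} (hanti : Antitone T) (hclosed : ∀ n, IsClosed (T n))
    (hne : ∀ n, (T n).Nonempty) {r : ℕ → ℝ} (hr : Tendsto r atTop (𝓝 0))
    (hdist : ∀ n, ∀ x ∈ T n, ∀ y ∈ T n, dist x y ≤ r n) : (⋂ n, T n).Nonempty := by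
  refine Metric.nonempty_iInter_of_nonempty_biInter hclosed
    (fun n ↦ Metric.isBounded_iff.2 ⟨r n, fun x hx y hy ↦ hdist n x hx y hy⟩)
    (fun n ↦ (hne n).mono (subset_iInter₂ fun _ hk ↦ hanti hk))
    (squeeze_zero (fun _ ↦ Metric.diam_nonneg) (fun n ↦ ?_) hr)
  obtain ⟨x, hx⟩ := hne n
  exact Metric.diam_le_of_forall_dist_le (dist_nonneg.trans (hdist n x hx x hx)) (hdist n)

section UniformlyConvex

variable {E : Type*} [NormedAddCommGroup E] [NormedSpace ℝ E] {H : E → ℝ≥0∞} {κ : ℝ}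

lemma dist_le_sqrt_of_midpoint_le (hκ : 0 < κ) {C : Set E} (hC : Convex ℝ C) {f g : E}
    (hf : f ∈ C) (hg : g ∈ C)
    (hmid : ENNReal.ofReal (κ * dist f g ^ 2) + 2 * H (midpoint ℝ f g) ≤ H f + H g)
    {M : ℝ≥0∞} (hM : M ≠ ∞) (hfM : H f ≤ M) (hgM : H g ≤ M) :
    dist f g ≤ √((2 * M - 2 * ⨅ h ∈ C, H h).toReal / κ) := by
  have hinf : ⨅ h ∈ C, H h ≤ H (midpoint ℝ f g) := iInf₂_le _ (hC.midpoint_mem hf hg)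
  have hgap : ENNReal.ofReal (κ * dist f g ^ 2) ≤ 2 * M - 2 * ⨅ h ∈ C, H h := by
    have htop : 2 * ⨅ h ∈ C, H h ≠ ∞ :=
      ENNReal.mul_ne_top (by norm_num) (ne_top_of_le_ne_top hM ((iInf₂_le f hf).trans hfM))
    refine ENNReal.le_sub_of_add_le_right htop ?_
    calc ENNReal.ofReal (κ * dist f g ^ 2) + 2 * ⨅ h ∈ C, H h
        ≤ ENNReal.ofReal (κ * dist f g ^ 2) + 2 * H (midpoint ℝ f g) := by gcongr
      _ ≤ H f + H g := hmid
      _ ≤ 2 * M := (add_le_add hfM hgM).trans_eq (two_mul M).symm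
  have htop : 2 * M - 2 * ⨅ h ∈ C, H h ≠ ∞ :=
    ENNReal.sub_ne_top (ENNReal.mul_ne_top (by norm_num) hM)
  exact le_sqrt_of_sq_le ((le_div_iff₀' hκ).2 ((ENNReal.ofReal_le_iff_le_toReal htop).1 hgap))

lemma exists_forall_mem_le_of_antitone [CompleteSpace E] (hH : LowerSemicontinuous H)
    (hκ : 0 < κ) {S : ℕ → Set E} (hanti : Antitone S) (hclosed : ∀ n, IsClosed (S n))
    (hconv : ∀ n, Convex ℝ (S n))
    (hmid : ∀ f ∈ S 0, ∀ g ∈ S 0,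
      ENNReal.ofReal (κ * dist f g ^ 2) + 2 * H (midpoint ℝ f g) ≤ H f + H g)
    {M : ℝ≥0∞} (hM : M ≠ ∞) (hne : ∀ n, ∃ f ∈ S n, H f ≤ M) :
    ∃ f, (∀ n, f ∈ S n) ∧ H f ≤ M := by
  let m : ℕ → ℝ≥0∞ := fun n ↦ ⨅ f ∈ S n, H f
  have hmM : ⨆ n, m n ≤ M := iSup_le fun n ↦ by
    obtain ⟨f, hf, hfM⟩ := hne n
    exact (iInf₂_le f hf).trans hfM
  have hmtop : ⨆ n, m n ≠ ∞ := ne_top_of_le_ne_top hM hmM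
  have hm : Tendsto m atTop (𝓝 (⨆ n, m n)) :=
    tendsto_atTop_iSup fun _ _ hij ↦ biInf_mono (hanti hij)
  obtain ⟨b, hbanti, hb, hblim⟩ := exists_seq_strictAnti_tendsto' (lt_top_iff_ne_top.2 hmtop)
  let T : ℕ → Set E := fun n ↦ S n ∩ H ⁻¹' Iic (b n)
  have hTne (n : ℕ) : (T n).Nonempty := by
    have hlt : m n < b n := (le_iSup m n).trans_lt (hb n).1
    obtain ⟨f, hf, hfH⟩ := by simpa only [m, iInf_lt_iff, exists_prop] using hlt
    exact ⟨f, hf, hfH.le⟩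
  have hr : Tendsto (fun n ↦ √((2 * b n - 2 * m n).toReal / κ)) atTop (𝓝 0) := by
    have hgap : Tendsto (fun n ↦ 2 * b n - 2 * m n) atTop (𝓝 0) := by
      have h2 : (2 : ℝ≥0∞) ≠ ∞ := by norm_num
      simpa only [tsub_self] using ENNReal.Tendsto.sub (ENNReal.Tendsto.const_mul hblim (.inr h2))
        (ENNReal.Tendsto.const_mul hm (.inr h2)) (.inl (ENNReal.mul_ne_top h2 hmtop))
    simpa only [ENNReal.toReal_zero, zero_div, sqrt_zero, Function.comp_def] using
      (((ENNReal.tendsto_toReal ENNReal.zero_ne_top).comp hgap).div_const κ).sqrt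
  obtain ⟨f, hf⟩ := nonempty_iInter_of_antitone_of_dist_le (T := T)
    (fun i j hij ↦ inter_subset_inter (hanti hij)
      (preimage_mono (Iic_subset_Iic.2 (hbanti.antitone hij))))
    (fun n ↦ (hclosed n).inter (hH.isClosed_preimage _)) hTne hr
    fun n f hf g hg ↦ dist_le_sqrt_of_midpoint_le hκ (hconv n) hf.1 hg.1
      (hmid f (hanti n.zero_le hf.1) g (hanti n.zero_le hg.1)) (hb n).2.ne hf.2 hg.2
  rw [mem_iInter] at hf
  exact ⟨f, fun n ↦ (hf n).1, (ge_of_tendsto' hblim fun n ↦ (hf n).2).trans hmM⟩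

end UniformlyConvex

section Density

variable {Ω : Type*} [MeasurableSpace Ω] {q : Measure Ω}

lemma lowerSemicontinuous_lintegral_comp {E : Type*} [NormedAddCommGroup E] {p : ℝ≥0∞}
    [Fact (1 ≤ p)] {φ : E → ℝ≥0∞} (hφ : Continuous φ) :
    LowerSemicontinuous fun f : Lp E p q ↦ ∫⁻ x, φ (f x) ∂q := by
  refine lowerSemicontinuous_iff_isClosed_preimage.2 fun y ↦ IsSeqClosed.isClosed ?_
  intro u f hu huf
  obtain ⟨n, -, hn⟩ := (tendstoInMeasure_of_tendsto_Lp huf).exists_seq_tendsto_ae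
  calc ∫⁻ x, φ (f x) ∂q = ∫⁻ x, liminf (fun k ↦ φ (u (n k) x)) atTop ∂q :=
        lintegral_congr_ae <| hn.mono fun x hx ↦ ((hφ.tendsto _).comp hx).liminf_eq.symm
    _ ≤ liminf (fun k ↦ ∫⁻ x, φ (u (n k) x) ∂q) atTop := lintegral_liminf_le' fun k ↦
        (hφ.comp_aestronglyMeasurable (Lp.aestronglyMeasurable (u (n k)))).aemeasurable
    _ ≤ y := liminf_le_of_frequently_le' (.of_forall fun k ↦ hu (n k))

/-- The measure with density `f` with respect to `q`, for `f ≥ 0` in `L¹(q)`; it identifies the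
finite measures absolutely continuous with respect to `q` with a closed convex cone of a Banach
space. Where `f` is negative, the density is `0`. -/
def densityMeasure (f : Lp ℝ 1 q) : Measure Ω := q.withDensity fun x ↦ ENNReal.ofReal (f x)

instance (f : Lp ℝ 1 q) : IsFiniteMeasure (densityMeasure f) :=
  isFiniteMeasure_withDensity_ofReal (L1.integrable_coeFn f).2

lemma exists_densityMeasure_eq {γ : Measure Ω} [IsFiniteMeasure γ] [SigmaFinite q] (h : γ ≪ q) :
    ∃ f : Lp ℝ 1 q, 0 ≤ f ∧ densityMeasure f = γ := by
  have hint : Integrable (fun x ↦ (γ.rnDeriv q x).toReal) q := Measure.integrable_toReal_rnDeriv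
  refine ⟨hint.toL1, (Lp.coeFn_nonneg _).1 ?_, ?_⟩
  · filter_upwards [hint.coeFn_toL1] with x hx
    exact hx ▸ ENNReal.toReal_nonneg
  · refine (withDensity_congr_ae ?_).trans (Measure.withDensity_rnDeriv_eq γ q h)
    filter_upwards [hint.coeFn_toL1, γ.rnDeriv_ne_top q] with x hx htop
    rw [hx, ENNReal.ofReal_toReal htop]

lemma integral_densityMeasure {f : Lp ℝ 1 q} (hf : 0 ≤ f) (g : Ω → ℝ) :
    ∫ x, g x ∂densityMeasure f = ∫ x, f x * g x ∂q := by
  rw [densityMeasure, integral_withDensity_eq_integral_toReal_smul₀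
    (L1.integrable_coeFn f).aemeasurable.ennreal_ofReal (ae_of_all _ fun _ ↦ ENNReal.ofReal_lt_top)]
  refine integral_congr_ae ?_
  filter_upwards [(Lp.coeFn_nonneg f).2 hf] with x hx
  rw [ENNReal.toReal_ofReal hx, smul_eq_mul]

lemma norm_eq_measureReal_densityMeasure_univ {f : Lp ℝ 1 q} (hf : 0 ≤ f) :
    ‖f‖ = (densityMeasure f).real univ := by
  rw [L1.norm_eq_integral_norm, ← integral_indicator_one .univ, integral_densityMeasure hf]
  refine integral_congr_ae ?_
  filter_upwards [(Lp.coeFn_nonneg f).2 hf] with x hx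
  rw [norm_of_nonneg hx, indicator_univ, Pi.one_apply, mul_one]

lemma klDiv_densityMeasure [IsFiniteMeasure q] (f : Lp ℝ 1 q) :
    klDiv (densityMeasure f) q = ∫⁻ x, ENNReal.ofReal (klFun (max (f x) 0)) ∂q := by
  have hac : densityMeasure f ≪ q := withDensity_absolutelyContinuous _ _
  rw [klDiv_eq_lintegral_klFun_of_ac hac]
  refine lintegral_congr_ae ?_
  filter_upwards [Measure.rnDeriv_withDensity₀ q
    (L1.integrable_coeFn f).aemeasurable.ennreal_ofReal] with x hx
  rw [densityMeasure, hx, ENNReal.toReal_ofReal']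

lemma lowerSemicontinuous_klDiv_densityMeasure [IsFiniteMeasure q] :
    LowerSemicontinuous fun f : Lp ℝ 1 q ↦ klDiv (densityMeasure f) q := by
  simp only [klDiv_densityMeasure]
  exact lowerSemicontinuous_lintegral_comp (φ := fun y : ℝ ↦ ENNReal.ofReal (klFun (max y 0)))
    (ENNReal.continuous_ofReal.comp (continuous_klFun.comp (continuous_id.max continuous_const)))

lemma ofReal_mul_norm_eq_lintegral {t : ℝ} (ht : 0 ≤ t) (f : Lp ℝ 1 q) :
    ENNReal.ofReal (t * ‖f‖) = ∫⁻ x, ENNReal.ofReal (t * |f x|) ∂q := by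
  rw [L1.norm_eq_integral_norm, ← integral_const_mul, ofReal_integral_eq_lintegral_ofReal
    ((L1.integrable_coeFn f).norm.const_mul t) (ae_of_all _ fun x ↦ by positivity)]
  rfl

lemma coeFn_midpoint {p : ℝ≥0∞} [Fact (1 ≤ p)] (f g : Lp ℝ p q) :
    ⇑(midpoint ℝ f g) =ᵐ[q] fun x ↦ (f x + g x) / 2 := by
  rw [midpoint_eq_smul_add]
  filter_upwards [Lp.coeFn_smul (⅟2 : ℝ) (f + g), Lp.coeFn_add f g] with x hsmul hadd
  rw [hsmul, Pi.smul_apply, hadd, Pi.add_apply, smul_eq_mul, invOf_eq_inv, inv_mul_eq_div]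

lemma ofReal_mul_norm_sub_add_klDiv_midpoint_le [IsFiniteMeasure q] {f g : Lp ℝ 1 q} (hf : 0 ≤ f)
    (hg : 0 ≤ g) {t : ℝ} (ht : 0 ≤ t) :
    ENNReal.ofReal (t * ‖f - g‖) + 2 * klDiv (densityMeasure (midpoint ℝ f g)) q ≤
      klDiv (densityMeasure f) q + klDiv (densityMeasure g) q +
        ENNReal.ofReal (t ^ 2 * ‖f + g‖) := by
  have hkl (h : Lp ℝ 1 q) : AEMeasurable (fun x ↦ ENNReal.ofReal (klFun (max (h x) 0))) q :=
    (measurable_klFun.comp_aemeasurable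
      ((L1.integrable_coeFn h).aemeasurable.max aemeasurable_const)).ennreal_ofReal
  have hnorm (h : Lp ℝ 1 q) (s : ℝ) : AEMeasurable (fun x ↦ ENNReal.ofReal (s * |h x|)) q :=
    ((L1.integrable_coeFn h).norm.aemeasurable.const_mul s).ennreal_ofReal
  rw [ofReal_mul_norm_eq_lintegral ht, ofReal_mul_norm_eq_lintegral (sq_nonneg t)]
  simp only [klDiv_densityMeasure]
  rw [← lintegral_const_mul'' _ (hkl _), ← lintegral_add_left' (hnorm _ _),
    ← lintegral_add_left' (hkl f), ← lintegral_add_right' _ (hnorm _ _)]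
  refine lintegral_mono_ae ?_
  filter_upwards [(Lp.coeFn_nonneg f).2 hf, (Lp.coeFn_nonneg g).2 hg, Lp.coeFn_sub f g,
    Lp.coeFn_add f g, coeFn_midpoint f g] with x hfx hgx hsub hadd hmid
  simp only [Pi.zero_apply] at hfx hgx
  have hmidx : 0 ≤ (f x + g x) / 2 := by positivity
  rw [hsub, hadd, hmid, Pi.sub_apply, Pi.add_apply, max_eq_left hfx, max_eq_left hgx,
    max_eq_left hmidx, abs_of_nonneg (add_nonneg hfx hgx), ← ENNReal.ofReal_ofNat,
    ← ENNReal.ofReal_mul zero_le_two, ← ENNReal.ofReal_add, ← ENNReal.ofReal_add,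
    ← ENNReal.ofReal_add]
  · exact ENNReal.ofReal_le_ofReal (mul_abs_sub_add_klFun_midpoint_le hfx hgx t)
  all_goals have := klFun_nonneg hfx; have := klFun_nonneg hgx; have := klFun_nonneg hmidx
  all_goals positivity

lemma ofReal_dist_sq_add_klDiv_midpoint_le [IsFiniteMeasure q] {f g : Lp ℝ 1 q} (hf : 0 ≤ f)
    (hg : 0 ≤ g) (hf1 : ‖f‖ ≤ 1) (hg1 : ‖g‖ ≤ 1) :
    ENNReal.ofReal (1 / 8 * dist f g ^ 2) + 2 * klDiv (densityMeasure (midpoint ℝ f g)) q ≤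
      klDiv (densityMeasure f) q + klDiv (densityMeasure g) q := by
  set d := ‖f - g‖
  -- `t = d / 4` maximizes `t * d - 2 * t ^ 2`, with value `d ^ 2 / 8`.
  have hsum : (d / 4) ^ 2 * ‖f + g‖ ≤ 1 / 8 * d ^ 2 := by
    have : ‖f + g‖ ≤ 2 := by linarith [norm_add_le f g]
    nlinarith [sq_nonneg d]
  have hsplit : ENNReal.ofReal (d / 4 * d) =
      ENNReal.ofReal (1 / 8 * d ^ 2) + ENNReal.ofReal (1 / 8 * d ^ 2) := by
    rw [← ENNReal.ofReal_add (by positivity) (by positivity)]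
    ring_nf
  rw [dist_eq_norm, ← ENNReal.add_le_add_iff_right (ENNReal.ofReal_ne_top (r := 1 / 8 * d ^ 2)),
    add_right_comm, ← hsplit]
  exact (ofReal_mul_norm_sub_add_klDiv_midpoint_le hf hg (by positivity)).trans
    (add_le_add_right (ENNReal.ofReal_le_ofReal hsum) _)

lemma convex_Ici_zero_Lp {p : ℝ≥0∞} : Convex ℝ (Ici (0 : Lp ℝ p q)) := by
  intro f hf g hg a b ha hb _
  rw [mem_Ici, ← Lp.coeFn_nonneg] at hf hg ⊢
  filter_upwards [hf, hg, Lp.coeFn_add (a • f) (b • g), Lp.coeFn_smul a f, Lp.coeFn_smul b g]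
    with x hfx hgx hadd hf_smul hg_smul
  rw [hadd, Pi.add_apply, hf_smul, hg_smul]
  exact add_nonneg (smul_nonneg ha hfx) (smul_nonneg hb hgx)

/-- The functional `f ↦ ∫ f g dq` on `L¹(q)`, for `g ∈ L^∞(q)`. -/
def integralMulCLM {g : Ω → ℝ} (hg : MemLp g ∞ q) : Lp ℝ 1 q →L[ℝ] ℝ :=
  (ContinuousLinearMap.mul ℝ ℝ).lpPairing q ∞ 1 hg.toLp

lemma integralMulCLM_apply {g : Ω → ℝ} (hg : MemLp g ∞ q) {f : Lp ℝ 1 q} (hf : 0 ≤ f) :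
    integralMulCLM hg f = ∫ x, g x ∂densityMeasure f := by
  rw [integralMulCLM, ContinuousLinearMap.lpPairing_eq_integral, integral_densityMeasure hf]
  refine integral_congr_ae ?_
  filter_upwards [hg.coeFn_toLp] with x hx
  rw [ContinuousLinearMap.mul_apply', hx, mul_comm]

/-- The nonnegative densities `f` for which `T` has law `ν` under `densityMeasure f`. Each marginal
condition on a coupling is of this form, with `T` a coordinate projection. -/
def densitiesWithLaw (q : Measure Ω) {Ω' : Type*} [MeasurableSpace Ω'] (T : Ω → Ω')
    (ν : Measure Ω') : Set (Lp ℝ 1 q) :=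
  {f | 0 ≤ f ∧ (densityMeasure f).map T = ν}

section Law

variable {Ω' : Type*} [MeasurableSpace Ω'] {T : Ω → Ω'} {ν : Measure Ω'} [IsFiniteMeasure ν]

lemma densitiesWithLaw_eq (hT : Measurable T) :
    densitiesWithLaw q T ν = Ici 0 ∩ ⋂ (A : Set Ω') (hA : MeasurableSet A),
      {f | integralMulCLM ((memLp_top_const 1).indicator (hT hA)) f = ν.real A} := by
  ext f
  simp only [densitiesWithLaw, mem_ofPred_eq, mem_inter_iff, mem_Ici, mem_iInter]
  refine and_congr_right fun hf ↦ ?_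
  have hreal {A : Set Ω'} (hA : MeasurableSet A) :
      integralMulCLM ((memLp_top_const 1).indicator (hT hA)) f =
        ((densityMeasure f).map T).real A := by
    rw [integralMulCLM_apply _ hf, map_measureReal_apply hT hA]
    exact integral_indicator_one (hT hA)
  refine ⟨fun h A hA ↦ by rw [hreal hA, h], fun h ↦ Measure.ext fun A hA ↦ ?_⟩
  rw [← measureReal_eq_measureReal_iff, ← hreal hA, h A hA]

lemma convex_densitiesWithLaw (hT : Measurable T) : Convex ℝ (densitiesWithLaw q T ν) := by
  rw [densitiesWithLaw_eq hT]
  exact convex_Ici_zero_Lp.inter <| convex_iInter₂ fun _ _ ↦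
    convex_hyperplane (integralMulCLM _).toLinearMap.isLinear _

lemma isClosed_densitiesWithLaw (hT : Measurable T) : IsClosed (densitiesWithLaw q T ν) := by
  rw [densitiesWithLaw_eq hT]
  exact isClosed_Ici.inter <| isClosed_iInter fun _ ↦ isClosed_iInter fun _ ↦
    isClosed_eq (integralMulCLM _).continuous continuous_const

end Law

lemma exists_mem_integral_le_of_forall_add [IsFiniteMeasure q] {K : Set (Lp ℝ 1 q)}
    (hclosed : IsClosed K) (hconv : Convex ℝ K) (hnonneg : ∀ f ∈ K, 0 ≤ f)
    (hnorm : ∀ f ∈ K, ‖f‖ ≤ 1) {c : Ω → ℝ} (hc : MemLp c ∞ q) {v : ℝ} {M : ℝ≥0∞} (hM : M ≠ ∞)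
    (h : ∀ δ > 0, ∃ f ∈ K, ∫ x, c x ∂densityMeasure f ≤ v + δ ∧ klDiv (densityMeasure f) q ≤ M) :
    ∃ f ∈ K, ∫ x, c x ∂densityMeasure f ≤ v ∧ klDiv (densityMeasure f) q ≤ M := by
  let S : ℕ → Set (Lp ℝ 1 q) := fun n ↦ K ∩ {f | integralMulCLM hc f ≤ v + 1 / (n + 1)}
  obtain ⟨f, hfS, hfM⟩ := exists_forall_mem_le_of_antitone (S := S)
    lowerSemicontinuous_klDiv_densityMeasure (κ := 1 / 8) (by norm_num)
    (fun i j hij f hf ↦ ⟨hf.1, hf.2.trans (add_le_add_right (Nat.one_div_le_one_div hij) v)⟩)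
    (fun n ↦ hclosed.inter (isClosed_le (integralMulCLM hc).continuous continuous_const))
    (fun n ↦ hconv.inter (convex_halfSpace_le (integralMulCLM hc).toLinearMap.isLinear _))
    (fun f hf g hg ↦ ofReal_dist_sq_add_klDiv_midpoint_le (hnonneg f hf.1) (hnonneg g hg.1)
      (hnorm f hf.1) (hnorm g hg.1)) hM fun n ↦ by
      obtain ⟨f, hfK, hfc, hfM⟩ := h (1 / (n + 1)) Nat.one_div_pos_of_nat
      exact ⟨f, ⟨hfK, (integralMulCLM_apply hc (hnonneg f hfK)).trans_le hfc⟩, hfM⟩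
  have hlim : Tendsto (fun n : ℕ ↦ v + 1 / ((n : ℝ) + 1)) atTop (𝓝 v) := by
    simpa only [add_zero] using tendsto_one_div_add_atTop_nhds_zero_nat.const_add v
  have hfK : f ∈ K := (hfS 0).1
  exact ⟨f, hfK, (integralMulCLM_apply hc (hnonneg f hfK)).symm.trans_le
    (ge_of_tendsto' hlim fun n ↦ (hfS n).2), hfM⟩

end Density

section Entropy

variable {Ω : Type*} [MeasurableSpace Ω] (γ q : Measure Ω) [IsProbabilityMeasure γ]
  [IsProbabilityMeasure q]

lemma Ent_eq_klDiv : Ent γ q = (klDiv γ q : EReal) := by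
  unfold Ent
  split_ifs with h
  · obtain ⟨hac, hint⟩ := h
    have hmass : γ univ = q univ := by rw [measure_univ, measure_univ]
    rw [integral_rnDeriv_mul_log hac, ← toReal_klDiv_of_measure_eq hac hmass,
      EReal.coe_ennreal_toReal (klDiv_ne_top hac ((integrable_rnDeriv_mul_log_iff hac).1 hint))]
  · have htop : klDiv γ q = ∞ := klDiv_eq_top_iff.2 fun hac hint ↦
      h ⟨hac, (integrable_rnDeriv_mul_log_iff hac).2 hint⟩
    rw [htop, EReal.coe_ennreal_top]

lemma Ent_nonneg : 0 ≤ Ent γ q :=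
  Ent_eq_klDiv γ q ▸ EReal.coe_ennreal_nonneg _

end Entropy

section Coupling

variable {α β : Type*} [MeasurableSpace α] [MeasurableSpace β] {μm : Measure α} {μp : Measure β}
  {c : α × β → ℝ} {γ : Measure (α × β)}

/-- `γ` is a coupling of `μm` and `μp`: these are its first and second marginals. -/
structure IsCoupling (γ : Measure (α × β)) (μm : Measure α) (μp : Measure β) : Prop where
  fst_eq : γ.fst = μm
  snd_eq : γ.snd = μp

lemma IsCoupling.isProbabilityMeasure [IsProbabilityMeasure μm] (hγ : IsCoupling γ μm μp) :
    IsProbabilityMeasure γ :=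
  ⟨by rw [← Measure.fst_univ, hγ.fst_eq, measure_univ]⟩

lemma isCoupling_prod [IsProbabilityMeasure μm] [IsProbabilityMeasure μp] :
    IsCoupling (μm.prod μp) μm μp :=
  ⟨Measure.fst_prod, Measure.snd_prod⟩

/-- The set `Opt(μ⁻, μ⁺)` of optimal transport plans for the cost `c`: the couplings attaining
`entCost μm μp c 0`. -/
def optimalCouplings (μm : Measure α) (μp : Measure β) (c : α × β → ℝ) : Set (Measure (α × β)) :=
  {γ | IsProbabilityMeasure γ ∧ γ.fst = μm ∧ γ.snd = μp ∧
    ((∫ p, c p ∂γ : ℝ) : EReal) = entCost μm μp c 0}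

lemma isCoupling_of_mem_optimalCouplings (hγ : γ ∈ optimalCouplings μm μp c) :
    IsCoupling γ μm μp :=
  ⟨hγ.2.1, hγ.2.2.1⟩

lemma entCost_le [IsProbabilityMeasure μm] (hγ : IsCoupling γ μm μp) (ε : ℝ) :
    entCost μm μp c ε ≤ ((∫ p, c p ∂γ : ℝ) : EReal) + (ε : EReal) * Ent γ (μm.prod μp) :=
  sInf_le ⟨γ, hγ.isProbabilityMeasure, hγ.fst_eq, hγ.snd_eq, rfl⟩

lemma le_entCost {ε : ℝ} {b : EReal} (h : ∀ γ, IsCoupling γ μm μp →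
      b ≤ ((∫ p, c p ∂γ : ℝ) : EReal) + (ε : EReal) * Ent γ (μm.prod μp)) :
    b ≤ entCost μm μp c ε := by
  refine le_sInf ?_
  rintro _ ⟨γ, -, hm, hp, rfl⟩
  exact h γ ⟨hm, hp⟩

lemma entCost_zero_le [IsProbabilityMeasure μm] (hγ : IsCoupling γ μm μp) :
    entCost μm μp c 0 ≤ ((∫ p, c p ∂γ : ℝ) : EReal) := by
  simpa only [EReal.coe_zero, zero_mul, add_zero] using entCost_le hγ 0

lemma entCost_le_entCost_zero_add [IsProbabilityMeasure μm]
    (hγ : γ ∈ optimalCouplings μm μp c) (ε : ℝ) :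
    entCost μm μp c ε ≤ entCost μm μp c 0 + (ε : EReal) * Ent γ (μm.prod μp) :=
  hγ.2.2.2 ▸ entCost_le (isCoupling_of_mem_optimalCouplings hγ) ε

variable [IsProbabilityMeasure μm] [IsProbabilityMeasure μp]

lemma exists_isCoupling_integral_le_of_forall_add (hc : MemLp c ∞ (μm.prod μp)) {v : ℝ}
    {M : ℝ≥0∞} (hM : M ≠ ∞) (h : ∀ δ > 0, ∃ γ, IsCoupling γ μm μp ∧ ∫ p, c p ∂γ ≤ v + δ ∧
      klDiv γ (μm.prod μp) ≤ M) :
    ∃ γ, IsCoupling γ μm μp ∧ ∫ p, c p ∂γ ≤ v ∧ klDiv γ (μm.prod μp) ≤ M := by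
  let K : Set (Lp ℝ 1 (μm.prod μp)) :=
    densitiesWithLaw _ Prod.fst μm ∩ densitiesWithLaw _ Prod.snd μp
  have hcoupling {f} (hf : f ∈ K) : IsCoupling (densityMeasure f) μm μp := ⟨hf.1.2, hf.2.2⟩
  have hnorm (f) (hf : f ∈ K) : ‖f‖ ≤ 1 := by
    have := (hcoupling hf).isProbabilityMeasure
    rw [norm_eq_measureReal_densityMeasure_univ hf.1.1, probReal_univ]
  obtain ⟨f, hf, hfc, hfM⟩ := exists_mem_integral_le_of_forall_add (K := K)
    ((isClosed_densitiesWithLaw measurable_fst).inter (isClosed_densitiesWithLaw measurable_snd))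
    ((convex_densitiesWithLaw measurable_fst).inter (convex_densitiesWithLaw measurable_snd))
    (fun f hf ↦ hf.1.1) hnorm hc hM fun δ hδ ↦ by
      obtain ⟨γ, hγ, hγc, hγM⟩ := h δ hδ
      have := hγ.isProbabilityMeasure
      have hac : γ ≪ μm.prod μp := (klDiv_ne_top_iff.1 (ne_top_of_le_ne_top hM hγM)).1
      obtain ⟨f, hf, rfl⟩ := exists_densityMeasure_eq hac
      exact ⟨f, ⟨⟨hf, hγ.fst_eq⟩, ⟨hf, hγ.snd_eq⟩⟩, hγc, hγM⟩
  exact ⟨densityMeasure f, hcoupling hf, hfc, hfM⟩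

lemma exists_forall_lt_Ent_of_integral_le_add (hc : MemLp c ∞ (μm.prod μp)) {v m : ℝ}
    (h : ∀ γ, IsCoupling γ μm μp → ∫ p, c p ∂γ ≤ v → (m : EReal) < Ent γ (μm.prod μp)) :
    ∃ δ > 0, ∀ γ, IsCoupling γ μm μp → ∫ p, c p ∂γ ≤ v + δ →
      (m : EReal) < Ent γ (μm.prod μp) := by
  by_contra! hcon
  have hm : 0 ≤ m := by
    obtain ⟨γ, hγ, -, hγm⟩ := hcon 1 one_pos
    have := hγ.isProbabilityMeasure
    exact EReal.coe_nonneg.1 ((Ent_nonneg γ _).trans hγm)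
  have hEnt {γ} (hγ : IsCoupling γ μm μp) :
      klDiv γ (μm.prod μp) ≤ ENNReal.ofReal m ↔ Ent γ (μm.prod μp) ≤ m := by
    have := hγ.isProbabilityMeasure
    rw [Ent_eq_klDiv, ← EReal.coe_ennreal_le_coe_ennreal_iff, EReal.coe_ennreal_ofReal,
      max_eq_left hm]
  obtain ⟨γ, hγ, hγc, hγm⟩ := exists_isCoupling_integral_le_of_forall_add hc
    ENNReal.ofReal_ne_top fun δ hδ ↦ by
      obtain ⟨γ, hγ, hγc, hγm⟩ := hcon δ hδ
      exact ⟨γ, hγ, hγc, (hEnt hγ).2 hγm⟩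
  exact ((hEnt hγ).1 hγm).not_gt (h γ hγ hγc)

lemma eventually_add_mul_le_entCost (hc : MemLp c ∞ (μm.prod μp)) {v m : ℝ}
    (hv : (v : EReal) = entCost μm μp c 0)
    (hm : (m : EReal) < sInf ((fun γ ↦ Ent γ (μm.prod μp)) '' optimalCouplings μm μp c)) :
    ∀ᶠ ε : ℝ in 𝓝[>] 0, ((v + ε * m : ℝ) : EReal) ≤ entCost μm μp c ε := by
  have hle {γ} (hγ : IsCoupling γ μm μp) : v ≤ ∫ p, c p ∂γ :=
    EReal.coe_le_coe_iff.1 (hv.trans_le (entCost_zero_le hγ))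
  obtain ⟨δ, hδ, hδm⟩ := exists_forall_lt_Ent_of_integral_le_add hc fun γ hγ hγc ↦
    hm.trans_le <| sInf_le ⟨γ, ⟨hγ.isProbabilityMeasure, hγ.fst_eq, hγ.snd_eq,
      hv ▸ congrArg Real.toEReal (hγc.antisymm (hle hγ))⟩, rfl⟩
  have hsmall : ∀ᶠ ε : ℝ in 𝓝[>] 0, ε * m < δ :=
    (((continuous_mul_const m).tendsto' 0 0 (zero_mul m)).eventually_lt_const hδ).filter_mono
      nhdsWithin_le_nhds
  filter_upwards [hsmall, self_mem_nhdsWithin] with ε hεδ (hε : 0 < ε)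
  have hε' : (0 : EReal) ≤ ε := EReal.coe_nonneg.2 hε.le
  refine le_entCost fun γ hγ ↦ ?_
  have := hγ.isProbabilityMeasure
  rcases le_or_gt (∫ p, c p ∂γ) (v + δ) with hnear | hfar
  · rw [EReal.coe_add, EReal.coe_mul]
    exact add_le_add (EReal.coe_le_coe_iff.2 (hle hγ))
      (mul_le_mul_of_nonneg_left (hδm γ hγ hnear).le hε')
  · exact (EReal.coe_le_coe_iff.2 (by linarith)).trans
      (le_add_of_nonneg_right (mul_nonneg hε' (Ent_nonneg γ _)))

end Coupling

lemma tendsto_toReal_sub_div {F : ℝ → EReal} {v l : ℝ}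
    (hlower : ∀ m < l, ∀ᶠ ε : ℝ in 𝓝[>] 0, ((v + ε * m : ℝ) : EReal) ≤ F ε)
    (hupper : ∀ m > l, ∀ᶠ ε : ℝ in 𝓝[>] 0, F ε ≤ ((v + ε * m : ℝ) : EReal)) :
    Tendsto (fun ε ↦ ((F ε).toReal - v) / ε) (𝓝[>] 0) (𝓝 l) := by
  have hfinite : ∀ᶠ ε in 𝓝[>] 0, ((F ε).toReal : EReal) = F ε := by
    filter_upwards [hlower (l - 1) (sub_one_lt l), hupper (l + 1) (lt_add_one l)] with ε hl hu
    exact EReal.coe_toReal (ne_top_of_le_ne_top (EReal.coe_ne_top _) hu)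
      (ne_bot_of_le_ne_bot (EReal.coe_ne_bot _) hl)
  refine tendsto_order.2 ⟨fun a ha ↦ ?_, fun a ha ↦ ?_⟩
  · obtain ⟨m, ham, hml⟩ := exists_between ha
    filter_upwards [hlower m hml, hfinite, self_mem_nhdsWithin] with ε hF hfin (hε : 0 < ε)
    rw [← hfin, EReal.coe_le_coe_iff] at hF
    rw [lt_div_iff₀ hε]
    linarith [mul_lt_mul_of_pos_left ham hε]
  · obtain ⟨m, hlm, hma⟩ := exists_between ha
    filter_upwards [hupper m hlm, hfinite, self_mem_nhdsWithin] with ε hF hfin (hε : 0 < ε)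
    rw [← hfin, EReal.coe_le_coe_iff] at hF
    rw [div_lt_iff₀ hε]
    linarith [mul_lt_mul_of_pos_left hma hε]

-- Boundedness of `c` under every coupling, not only under `μm.prod μp`, rules out junk values
-- `∫ p, c p ∂γ = 0` in `entCost μm μp c 0`.
theorem entCost_right_derivative_at_zero_general {α β : Type*} [MeasurableSpace α]
    [MeasurableSpace β] (μm : Measure α) (μp : Measure β) [IsProbabilityMeasure μm]
    [IsProbabilityMeasure μp] (c : α × β → ℝ) (hc : ∀ γ, IsCoupling γ μm μp → MemLp c ∞ γ)
    (hfinite : ∃ γ₀ ∈ optimalCouplings μm μp c, Ent γ₀ (μm.prod μp) ≠ ⊤) :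
    Tendsto (fun ε : ℝ ↦ ((entCost μm μp c ε).toReal - (entCost μm μp c 0).toReal) / ε)
      (𝓝[>] 0) (𝓝 (sInf ((fun γ ↦ Ent γ (μm.prod μp)) '' optimalCouplings μm μp c)).toReal) := by
  obtain ⟨γ₀, hγ₀, hγ₀top⟩ := hfinite
  set L := sInf ((fun γ ↦ Ent γ (μm.prod μp)) '' optimalCouplings μm μp c)
  have hLnonneg : 0 ≤ L := le_sInf <| forall_mem_image.2 fun γ hγ ↦
    have := hγ.1
    Ent_nonneg γ _
  have hL : (L.toReal : EReal) = L := EReal.coe_toReal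
    (ne_top_of_le_ne_top hγ₀top (sInf_le ⟨γ₀, hγ₀, rfl⟩)) (EReal.bot_lt_zero.trans_le hLnonneg).ne'
  rw [← hγ₀.2.2.2, EReal.toReal_coe]
  refine tendsto_toReal_sub_div (fun m hm ↦ eventually_add_mul_le_entCost (hc _ isCoupling_prod)
    hγ₀.2.2.2 ((EReal.coe_lt_coe_iff.2 hm).trans_eq hL)) fun m hm ↦ ?_
  obtain ⟨_, ⟨γ, hγ, rfl⟩, hγm⟩ := sInf_lt_iff.1 (hL.symm.trans_lt (EReal.coe_lt_coe_iff.2 hm))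
  filter_upwards [self_mem_nhdsWithin] with ε (hε : 0 < ε)
  rw [EReal.coe_add, EReal.coe_mul, hγ₀.2.2.2]
  exact (entCost_le_entCost_zero_add hγ ε).trans
    (add_le_add_right (mul_le_mul_of_nonneg_left hγm.le (EReal.coe_nonneg.2 hε.le)) _)

lemma ae_mem_msupport {X : Type*} [TopologicalSpace X] [HereditarilyLindelofSpace X]
    [MeasurableSpace X] (μ : Measure X) : ∀ᵐ x ∂μ, x ∈ msupport μ := by
  have h : msupport μ = μ.support := by
    rw [Measure.support_eq_forall_isOpen]
    ext x
    simp only [msupport, mem_ofPred_eq, pos_iff_ne_zero]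
    exact forall_congr' fun U ↦ forall_comm
  exact h ▸ Measure.support_mem_ae

lemma IsCoupling.ae_mem_msupport_prod {α β : Type*} [TopologicalSpace α]
    [HereditarilyLindelofSpace α] [MeasurableSpace α] [TopologicalSpace β]
    [HereditarilyLindelofSpace β] [MeasurableSpace β] {γ : Measure (α × β)} {μm : Measure α}
    {μp : Measure β} (hγ : IsCoupling γ μm μp) :
    ∀ᵐ p ∂γ, p ∈ msupport μm ×ˢ msupport μp :=
  (ae_of_ae_map measurable_fst.aemeasurable (hγ.fst_eq ▸ ae_mem_msupport μm : _)).and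
    (ae_of_ae_map measurable_snd.aemeasurable (hγ.snd_eq ▸ ae_mem_msupport μp : _))

lemma memLp_top_of_continuousOn {X : Type*} [TopologicalSpace X] [MeasurableSpace X]
    [OpensMeasurableSpace X] [T2Space X] {K : Set X} (hK : IsCompact K) {c : X → ℝ}
    (hc : ContinuousOn c K) {γ : Measure X} (hγ : ∀ᵐ x ∂γ, x ∈ K) : MemLp c ∞ γ := by
  obtain ⟨C, hC⟩ := hK.exists_bound_of_continuousOn hc
  refine memLp_top_of_bound ?_ C (hγ.mono hC)
  rw [← Measure.restrict_eq_self_of_ae_mem hγ]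
  exact hc.aestronglyMeasurable hK.measurableSet

/-- If some optimal transport plan has finite entropy, then
`(v_ε − v₀)/ε → inf { Ent(γ | μ⁻⊗μ⁺) : γ optimal }` as `ε → 0⁺`. -/
theorem entCost_right_derivative_at_zero {d : ℕ}
    (μm μp : Measure (EuclideanSpace ℝ (Fin d)))
    [IsProbabilityMeasure μm] [IsProbabilityMeasure μp]
    (hXm : IsCompact (msupport μm)) (hXp : IsCompact (msupport μp))
    (c : EuclideanSpace ℝ (Fin d) × EuclideanSpace ℝ (Fin d) → ℝ)
    (hc : ContinuousOn c (msupport μm ×ˢ msupport μp))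
    (Opt : Set (Measure (EuclideanSpace ℝ (Fin d) × EuclideanSpace ℝ (Fin d))))
    (hOpt : Opt = {γ | IsProbabilityMeasure γ ∧ γ.fst = μm ∧ γ.snd = μp ∧
      ((∫ p, c p ∂γ : ℝ) : EReal) = entCost μm μp c 0})
    (hfinite : ∃ γ0 ∈ Opt, Ent γ0 (μm.prod μp) ≠ ⊤) :
    Tendsto (fun ε : ℝ => ((entCost μm μp c ε).toReal - (entCost μm μp c 0).toReal) / ε)
      (nhdsWithin 0 (Set.Ioi 0))
      (nhds ((sInf ((fun γ => Ent γ (μm.prod μp)) '' Opt)).toReal)) := by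
  subst hOpt
  exact entCost_right_derivative_at_zero_general μm μp c (fun γ hγ ↦ memLp_top_of_continuousOn
    (hXm.prod hXp) hc hγ.ae_mem_msupport_prod) hfinite
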